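/- Let 0 < r < 1 and 2 ≤ p < ∞ with h := r − 3/p > 0. There exists a constant C, depending only on r and p, such that for every Schwartz vector field v : ℝ³ → ℝ³ with div v = 0 and vorticity components ω^{mn} = ∂_m v^n − ∂_n v^m, one has both ‖∇v‖_{L^∞} ≤ C · ‖v‖_{L²}^{h/(h+5/2)} · (max_{m,n} [ω^{mn}]_{r,p})^{(5/2)/(h+5/2)} and max_{m,n} ‖ω^{mn}‖_{L^∞} ≤ C · ‖v‖_{L²}^{h/(h+5/2)} · (max_{m,n} [ω^{mn}]_{r,p})^{(5/2)/(h+5/2)}, where ‖∇v‖_{L^∞} is the supremum over x of the norm of the Jacobian matrix of v. -/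

import Mathlib

open MeasureTheory ENNReal
open scoped RealInnerProductSpace

noncomputable section

/-- Shorthand for Euclidean space `ℝ^d`. -/
abbrev Ed (d : ℕ) := EuclideanSpace ℝ (Fin d)

/-- The homogeneous Besov (Gagliardo) seminorm `[f]_{r,p}`. -/
def gagliardo (d : ℕ) (r p : ℝ) {F : Type*} [NormedAddCommGroup F] (f : Ed d → F) : ℝ≥0∞ :=
  (∫⁻ x, ∫⁻ y, (‖f x - f y‖₊ : ℝ≥0∞) ^ p / (‖x - y‖₊ : ℝ≥0∞) ^ (r * p + d)) ^ (1 / p)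

/-- The homogeneous Hölder seminorm `{f}_r`. -/
def holderSemi (d : ℕ) (r : ℝ) {F : Type*} [NormedAddCommGroup F] (f : Ed d → F) : ℝ≥0∞ :=
  ⨆ x, ⨆ y, (‖f x - f y‖₊ : ℝ≥0∞) / (‖x - y‖₊ : ℝ≥0∞) ^ r

/-- The Fourier transform `f̂(κ) = ∫ e^{-i x·κ} f(x) dx`. -/
def ftransform (d : ℕ) (f : Ed d → ℂ) (κ : Ed d) : ℂ :=
  ∫ x, Complex.exp (-(Complex.I * (⟪x, κ⟫ : ℂ))) * f x

/-- The homogeneous Sobolev seminorm `[f]_θ = ((2π)^{-d} ∫ |κ|^{2θ} |f̂(κ)|² dκ)^{1/2}`. -/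
def sobolevSemi (d : ℕ) (θ : ℝ) (f : Ed d → ℂ) : ℝ≥0∞ :=
  (ENNReal.ofReal ((2 * Real.pi) ^ (-(d : ℝ))) *
    ∫⁻ κ, (‖κ‖₊ : ℝ≥0∞) ^ (2 * θ) * (‖ftransform d f κ‖₊ : ℝ≥0∞) ^ (2 : ℕ)) ^ ((1 : ℝ) / 2)

/-- A symbol of class `S⁰_{ph}`: smooth away from the origin and positively
homogeneous of degree `0`. -/
def IsSymbol0 (d : ℕ) (a : Ed d → ℂ) : Prop :=
  ContDiffOn ℝ (⊤ : ℕ∞) a {0}ᶜ ∧ ∀ (c : ℝ) (κ : Ed d), 0 < c → κ ≠ 0 → a (c • κ) = a κ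

/-- The operator `𝔞[f](x) = (2π)^{-d} ∫ e^{i x·κ} a(κ) f̂(κ) dκ` associated with a symbol. -/
def symbOp (d : ℕ) (a : Ed d → ℂ) (f : Ed d → ℂ) (x : Ed d) : ℂ :=
  (((2 * Real.pi) ^ (-(d : ℝ)) : ℝ) : ℂ) *
    ∫ κ, Complex.exp (Complex.I * (⟪x, κ⟫ : ℂ)) * a κ * ftransform d f κ

/-- The partial derivative `∂_i f(x)`. -/
def pd (d : ℕ) (i : Fin d) (f : Ed d → ℝ) (x : Ed d) : ℝ :=
  fderiv ℝ f x (EuclideanSpace.single i 1)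

/-- The half-wave propagator `(e^{itD} g)(x) = (2π)^{-d} ∫ e^{i x·κ} e^{i t|κ|} ĝ(κ) dκ`. -/
def halfWave (d : ℕ) (t : ℝ) (g : Ed d → ℂ) (x : Ed d) : ℂ :=
  (((2 * Real.pi) ^ (-(d : ℝ)) : ℝ) : ℂ) *
    ∫ κ, Complex.exp (Complex.I * ((⟪x, κ⟫ : ℂ) + (t : ℂ) * ((‖κ‖ : ℝ) : ℂ))) *
      ftransform d g κ

end

/-
Let `G` be the Gaussian of mass one, `G_t = t^{-d} G(· / t)`, and follow `A(t) = G_t * ∂_u v^n` at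
a fixed point, so that `A(0) = ∂_u v^n`. Moving `∂_u` onto the Gaussian and applying Hölder's
inequality gives `|A(R)| ≲ R^{-a} ‖v‖_s` with `a = 1 + d / s`. By the heat equation
`A'(t) = (t / 2π) G_t * ∂_u Δ v^n`, and `Δ v^n = ∑_m ∂_m ω^{mn}` because `div v = 0`. Moving both
derivatives onto the Gaussian leaves kernels `∂_m ∂_u G` of mean zero, so that only differences of
`ω^{mn}` enter, and Hölder's inequality against the Gagliardo integrand gives
`|A'(t)| ≲ t^{h - 1} [ω]_{r,p}` with `h = r - d / p > 0`. Integrating over `[0, R]` yields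
`|∂_u v^n| ≲ R^{-a} ‖v‖_s + R^h [ω]_{r,p}`, and it remains to optimize `R`.
-/

open SchwartzMap LineDeriv Laplacian Function
open scoped Nat

section Interpolation

theorem enorm_sub_le_of_enorm_deriv_le_rpow {F : Type*} [NormedAddCommGroup F] [NormedSpace ℝ F]
    {A A' : ℝ → F} (hA : ∀ t, HasDerivAt A (A' t) t) {h : ℝ} (hh : 0 < h) {M : ℝ≥0∞}
    (hA' : ∀ t, 0 < t → ‖A' t‖ₑ ≤ M * ENNReal.ofReal t ^ (h - 1)) {R : ℝ} (hR : 0 < R) :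
    ‖A R - A 0‖ₑ ≤ M / ENNReal.ofReal h * ENNReal.ofReal R ^ h := by
  obtain rfl | hM := eq_or_ne M ∞
  · simp [ENNReal.top_div, ENNReal.top_mul, hR]
  lift M to NNReal using hM
  have norm_deriv_le (t : ℝ) (ht : 0 < t) : ‖deriv A t‖ ≤ M * t ^ (h - 1) := by
    have := hA' t ht
    rw [ENNReal.ofReal_rpow_of_pos ht, ← ENNReal.ofReal_coe_nnreal,
      ← ENNReal.ofReal_mul M.coe_nonneg, ← ofReal_norm] at this
    rw [(hA t).deriv]
    exact (ENNReal.ofReal_le_ofReal_iff (by positivity)).1 this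
  have key : ‖A R - A 0‖ ≤ M / h * R ^ h :=
    calc ‖A R - A 0‖
        ≤ ∫ t in 0..R, M * t ^ (h - 1) :=
          norm_sub_le_integral_of_norm_deriv_le_of_le hR.le
            (fun t _ ↦ (hA t).continuousAt.continuousWithinAt)
            (fun t _ ↦ (hA t).differentiableAt.differentiableWithinAt)
            (.of_forall fun t ht ↦ norm_deriv_le t ht.1)
            ((intervalIntegral.intervalIntegrable_rpow' (by linarith)).const_mul _)
      _ = M / h * R ^ h := by
          rw [intervalIntegral.integral_const_mul, integral_rpow (.inl (by linarith)),
            sub_add_cancel, Real.zero_rpow hh.ne', sub_zero, div_mul_eq_mul_div, mul_div_assoc]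
  rw [← ofReal_norm, ENNReal.ofReal_rpow_of_pos hR, ← ENNReal.ofReal_coe_nnreal,
    ← ENNReal.ofReal_div_of_pos hh, ← ENNReal.ofReal_mul (by positivity)]
  exact ENNReal.ofReal_le_ofReal key

theorem exists_rpow_neg_mul_eq_rpow_mul_rpow {a b : ℝ} (ha : 0 < a) (hb : 0 < b) {V M : ℝ≥0∞}
    (hV0 : V ≠ 0) (hV : V ≠ ∞) (hM0 : M ≠ 0) (hM : M ≠ ∞) :
    ∃ t : ℝ, 0 < t ∧
      ENNReal.ofReal t ^ (-a) * V = V ^ (b / (b + a)) * M ^ (a / (b + a)) ∧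
      ENNReal.ofReal t ^ b * M = V ^ (b / (b + a)) * M ^ (a / (b + a)) := by
  let τ := V ^ (1 / (b + a)) * M ^ (-(1 / (b + a)))
  have hτ0 : τ ≠ 0 := by simp [τ, hV0, hM, hV, hM0]
  have hτ : τ ≠ ∞ := by simp [τ, ENNReal.mul_eq_top, hV0, hM, hV, hM0]
  have hrpow (c : ℝ) : τ ^ c = V ^ (c / (b + a)) * M ^ (-(c / (b + a))) := by
    rw [ENNReal.mul_rpow_of_ne_top (by simp [hV0, hV]) (by simp [hM0, hM]),
      ← ENNReal.rpow_mul, ← ENNReal.rpow_mul]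
    congr 2 <;> ring
  have rpow_mul_self {Y : ℝ≥0∞} (c : ℝ) (hY0 : Y ≠ 0) (hY : Y ≠ ∞) : Y ^ c * Y = Y ^ (c + 1) := by
    rw [ENNReal.rpow_add _ _ hY0 hY, ENNReal.rpow_one]
  have low : τ ^ (-a) * V = V ^ (b / (b + a)) * M ^ (a / (b + a)) := by
    rw [hrpow, mul_right_comm, rpow_mul_self _ hV0 hV]
    congr 2 <;> field_simp
    ring
  have high : τ ^ b * M = V ^ (b / (b + a)) * M ^ (a / (b + a)) := by
    rw [hrpow, mul_assoc, rpow_mul_self _ hM0 hM]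
    congr 2
    field_simp
    ring
  refine ⟨τ.toReal, ENNReal.toReal_pos hτ0 hτ, ?_⟩
  rw [ENNReal.ofReal_toReal hτ]
  exact ⟨low, high⟩

theorem le_mul_rpow_mul_rpow_of_forall_le {a b : ℝ} (ha : 0 < a) (hb : 0 < b) {C V M x : ℝ≥0∞}
    (hC : C ≠ ∞) (hV0 : V ≠ 0) (hV : V ≠ ∞) (hx : ∀ t : ℝ, 0 < t →
      x ≤ C * (ENNReal.ofReal t ^ (-a) * V + ENNReal.ofReal t ^ b * M)) :
    x ≤ 2 * C * (V ^ (b / (b + a)) * M ^ (a / (b + a))) := by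
  obtain rfl | hM0 := eq_or_ne M 0
  · have lim : Filter.Tendsto (fun t : ℝ ↦ C * (ENNReal.ofReal t ^ (-a) * V)) Filter.atTop
        (nhds (C * (∞ ^ (-a) * V))) :=
      ENNReal.Tendsto.const_mul (ENNReal.Tendsto.mul_const
        (ENNReal.tendsto_ofReal_atTop.ennrpow_const _) (.inr hV)) (.inr hC)
    have x_le : x ≤ C * (∞ ^ (-a) * V) := ge_of_tendsto lim <| by
      filter_upwards [Filter.eventually_gt_atTop 0] with t ht
      simpa using hx t ht
    have x_eq_zero : x = 0 := by simpa [ENNReal.top_rpow_of_neg (neg_lt_zero.2 ha)] using x_le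
    simp [x_eq_zero]
  obtain rfl | hM := eq_or_ne M ∞
  · have hpos : V ^ (b / (b + a)) ≠ 0 := by simp [hV0, hV]
    have hexp : 0 < a / (b + a) := by positivity
    rw [ENNReal.top_rpow_of_pos hexp, ENNReal.mul_top hpos, mul_comm 2, mul_assoc,
      ENNReal.mul_top two_ne_zero]
    exact (hx 1 one_pos).trans (by gcongr; exact le_top)
  obtain ⟨t, ht, low, high⟩ := exists_rpow_neg_mul_eq_rpow_mul_rpow ha hb hV0 hV hM0 hM
  have x_le := hx t ht
  rw [low, high, ← two_mul, ← mul_assoc, mul_comm C] at x_le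
  exact x_le

end Interpolation

section OrthonormalBasis

variable {ι E F : Type*} [Fintype ι] [NormedAddCommGroup E] [InnerProductSpace ℝ E]
  [NormedAddCommGroup F] [NormedSpace ℝ F]

theorem enorm_le_sum_enorm_apply_orthonormalBasis (b : OrthonormalBasis ι ℝ E) (L : E →L[ℝ] F) :
    ‖L‖ₑ ≤ ∑ i, ‖L (b i)‖ₑ := by
  have h : ‖L‖ ≤ ∑ i, ‖L (b i)‖ := by
    refine L.opNorm_le_bound (by positivity) fun u ↦ ?_
    calc ‖L u‖ = ‖∑ i, ⟪b i, u⟫ • L (b i)‖ := by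
          conv_lhs => rw [← b.sum_repr' u, map_sum]
          simp only [map_smul]
      _ ≤ ∑ i, ‖⟪b i, u⟫ • L (b i)‖ := norm_sum_le _ _
      _ ≤ ∑ i, ‖L (b i)‖ * ‖u‖ := by
          gcongr with i
          rw [norm_smul, mul_comm]
          gcongr
          simpa using norm_inner_le_norm (𝕜 := ℝ) (b i) u
      _ = (∑ i, ‖L (b i)‖) * ‖u‖ := (Finset.sum_mul ..).symm
  simp_rw [← ofReal_norm]
  rw [← ENNReal.ofReal_sum_of_nonneg fun i _ ↦ norm_nonneg _]
  exact ENNReal.ofReal_le_ofReal h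

theorem enorm_le_sum_enorm_apply (y : EuclideanSpace ℝ ι) : ‖y‖ₑ ≤ ∑ i, ‖y i‖ₑ := by
  calc ‖y‖ₑ = ‖∑ i, y i • EuclideanSpace.basisFun ι ℝ i‖ₑ := by
        congr 1
        simpa using ((EuclideanSpace.basisFun ι ℝ).sum_repr y).symm
    _ ≤ ∑ i, ‖y i • EuclideanSpace.basisFun ι ℝ i‖ₑ := enorm_sum_le _ _
    _ = ∑ i, ‖y i‖ₑ := by simp_rw [enorm_smul, OrthonormalBasis.enorm_eq_one, mul_one]

end OrthonormalBasis

section LineDeriv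

section NormedSpace

variable {E F : Type*} [NormedAddCommGroup E] [NormedSpace ℝ E] [NormedAddCommGroup F]
  [NormedSpace ℝ F]

theorem lineDerivOp_comm (f : 𝓢(E, F)) (u w : E) : ∂_{u} (∂_{w} f) = ∂_{w} (∂_{u} f) := by
  ext x
  have hf (a b : E) : ∂_{a} (∂_{b} f) x = fderiv ℝ (fderiv ℝ f) x a b := by
    have hf' : HasFDerivAt (fderiv ℝ f) (fderiv ℝ (fderiv ℝ f) x) x :=
      (fderivCLM ℝ E F f).hasFDerivAt x
    have h := (hf'.clm_apply (hasFDerivAt_const b x)).fderiv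
    rw [lineDerivOp_apply_eq_fderiv, show ⇑(∂_{b} f : 𝓢(E, F)) = fun y ↦ fderiv ℝ f y b from rfl, h]
    simp
  have hsymm := (f.smooth 2).contDiffAt (x := x).isSymmSndFDerivAt (by simp)
  rw [hf, hf, hsymm u w]

theorem integral_lineDerivOp_eq_zero [FiniteDimensional ℝ E] [MeasurableSpace E] [BorelSpace E]
    (μ : Measure E) [μ.IsAddHaarMeasure] (f : 𝓢(E, ℝ)) (u : E) : ∫ x, ∂_{u} f x ∂μ = 0 := by
  have h1 (x : E) : HasLineDerivAt ℝ (fun _ ↦ (1 : ℝ)) 0 x u :=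
    (hasFDerivAt_const (1 : ℝ) x).hasLineDerivAt u
  have hf (x : E) : HasLineDerivAt ℝ f (∂_{u} f x) x u := (f.hasFDerivAt x).hasLineDerivAt u
  simpa using integral_bilinear_hasLineDerivAt_right_eq_neg_left_of_integrable (μ := μ)
    (B := ContinuousLinearMap.lsmul ℝ ℝ) (by simp)
    (by simpa using SchwartzMap.integrable (∂_{u} f)) (by simpa using f.integrable)
    (fun x _ ↦ h1 x) fun x _ ↦ hf x

end NormedSpace

variable {E F : Type*} [NormedAddCommGroup E] [InnerProductSpace ℝ E] [NormedAddCommGroup F]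
  [NormedSpace ℝ F]

theorem fderiv_apply_eq_sum_lineDerivOp {ι : Type*} [Fintype ι] (b : OrthonormalBasis ι ℝ E)
    (f : 𝓢(E, F)) (x u : E) : fderiv ℝ f x u = ∑ i, ⟪u, b i⟫ • ∂_{b i} f x := by
  conv_lhs => rw [← b.sum_repr' u]
  simp [lineDerivOp_apply_eq_fderiv, real_inner_comm u]

theorem laplacian_lineDerivOp [FiniteDimensional ℝ E] (f : 𝓢(E, F)) (u : E) :
    Δ (∂_{u} f) = ∂_{u} (Δ f) := by
  simp_rw [laplacian_eq_sum (stdOrthonormalBasis ℝ E), lineDerivOp_sum, lineDerivOp_comm _ _ u]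

end LineDeriv

section Gaussian

variable {E : Type*} [NormedAddCommGroup E]

theorem exists_norm_iteratedFDeriv_exp_comp_le [NormedSpace ℝ E]
    {h : E → ℝ} (hh : h.HasTemperateGrowth) (n : ℕ) :
    ∃ (k : ℕ) (C : ℝ), ∀ x,
      ‖iteratedFDeriv ℝ n (Real.exp ∘ h) x‖ ≤ C * (1 + ‖x‖) ^ k * Real.exp (h x) := by
  obtain ⟨k, C, hC, hbound⟩ := hh.norm_iteratedFDeriv_le_uniform n
  refine ⟨k * n, n ! * (C + 1) ^ n, fun x ↦ ?_⟩
  have one_le : 1 ≤ (C + 1) * (1 + ‖x‖) ^ k :=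
    one_le_mul_of_one_le_of_one_le (by linarith) (one_le_pow₀ (by simp))
  calc ‖iteratedFDeriv ℝ n (Real.exp ∘ h) x‖
      ≤ n ! * Real.exp (h x) * ((C + 1) * (1 + ‖x‖) ^ k) ^ n := by
        refine norm_iteratedFDeriv_comp_le Real.contDiff_exp hh.1 (mod_cast le_top) x
          (fun i _ ↦ ?_) (fun i hi hin ↦ ?_)
        · simp [norm_iteratedFDeriv_eq_norm_iteratedDeriv, iteratedDeriv_eq_iterate]
        · calc ‖iteratedFDeriv ℝ i h x‖ ≤ C * (1 + ‖x‖) ^ k := hbound i hin x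
            _ ≤ (C + 1) * (1 + ‖x‖) ^ k := by gcongr; linarith
            _ ≤ _ := le_self_pow₀ one_le (by lia)
    _ = _ := by rw [mul_pow, ← pow_mul]; ring

theorem one_add_pow_mul_exp_neg_pi_sq_le (m : ℕ) {y : ℝ} (hy : 0 ≤ y) :
    (1 + y) ^ m * Real.exp (-Real.pi * y ^ 2) ≤ m ! * Real.exp 2 := by
  have hpow : (1 + y) ^ m ≤ m ! * Real.exp (1 + y) := by
    have := Real.pow_div_factorial_le_exp (1 + y) (by positivity) m
    rwa [div_le_iff₀' (by positivity)] at this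
  have hexp : 1 + y + -Real.pi * y ^ 2 ≤ 2 := by
    nlinarith [Real.pi_gt_three, sq_nonneg (y - 1), sq_nonneg y]
  calc (1 + y) ^ m * Real.exp (-Real.pi * y ^ 2)
      ≤ m ! * Real.exp (1 + y) * Real.exp (-Real.pi * y ^ 2) := by gcongr
    _ = m ! * Real.exp (1 + y + -Real.pi * y ^ 2) := by rw [mul_assoc, ← Real.exp_add]
    _ ≤ _ := by gcongr

variable [InnerProductSpace ℝ E]

variable (E) in
/-- The Gaussian `z ↦ exp (-π ‖z‖²)`, of total mass one, as a Schwartz function. -/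
noncomputable def schwartzGaussian : 𝓢(E, ℝ) where
  toFun z := Real.exp (-Real.pi * ‖z‖ ^ 2)
  smooth' := Real.contDiff_exp.comp (contDiff_const.mul (contDiff_norm_sq ℝ))
  decay' k n := by
    have hq : (fun z : E ↦ -Real.pi * ‖z‖ ^ 2).HasTemperateGrowth := by fun_prop
    obtain ⟨m, C, hC⟩ := exists_norm_iteratedFDeriv_exp_comp_le hq n
    refine ⟨C * ((k + m)! * Real.exp 2), fun z ↦ ?_⟩
    have hC0 : 0 ≤ C := by simpa using (norm_nonneg _).trans (hC 0)
    calc ‖z‖ ^ k * ‖iteratedFDeriv ℝ n (fun z : E ↦ Real.exp (-Real.pi * ‖z‖ ^ 2)) z‖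
        ≤ (1 + ‖z‖) ^ k * (C * (1 + ‖z‖) ^ m * Real.exp (-Real.pi * ‖z‖ ^ 2)) := by
          gcongr
          · linarith
          · exact hC z
      _ = C * ((1 + ‖z‖) ^ (k + m) * Real.exp (-Real.pi * ‖z‖ ^ 2)) := by ring
      _ ≤ _ := mul_le_mul_of_nonneg_left
        (one_add_pow_mul_exp_neg_pi_sq_le _ (norm_nonneg z)) hC0

theorem schwartzGaussian_apply (z : E) : schwartzGaussian E z = Real.exp (-Real.pi * ‖z‖ ^ 2) := rfl

theorem lineDerivOp_schwartzGaussian_apply (u z : E) :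
    ∂_{u} (schwartzGaussian E) z = -(2 * Real.pi * ⟪z, u⟫ * schwartzGaussian E z) := by
  have h : HasFDerivAt (schwartzGaussian E) _ z :=
    (((hasStrictFDerivAt_norm_sq z).hasFDerivAt).const_mul (-Real.pi)).exp
  rw [lineDerivOp_apply_eq_fderiv, h.fderiv]
  simp only [schwartzGaussian_apply, smul_apply, innerSL_apply_apply, smul_eq_mul]
  ring

theorem integral_schwartzGaussian [FiniteDimensional ℝ E] [MeasurableSpace E] [BorelSpace E] :
    ∫ z, schwartzGaussian E z = 1 := by
  simpa [schwartzGaussian_apply, Real.pi_ne_zero] using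
    GaussianFourier.integral_rexp_neg_mul_sq_norm (V := E) Real.pi_pos

end Gaussian

section Mollify

variable {E F ι : Type*} [NormedAddCommGroup E] [InnerProductSpace ℝ E] [FiniteDimensional ℝ E]
  [MeasurableSpace E] [BorelSpace E] [NormedAddCommGroup F] [NormedSpace ℝ F]

/-- The average `∫ K(z) f(x - t z) dz` of `f` at scale `t`, which for `t > 0` is the convolution
`(K_t * f)(x)` with `K_t = t^{-d} K(· / t)`. Unlike the convolution it makes sense at `t = 0`. -/
noncomputable def mollify (K : 𝓢(E, ℝ)) (f : 𝓢(E, F)) (t : ℝ) (x : E) : F :=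
  ∫ z, K z • f (x - t • z)

theorem integrable_smul_comp_sub_smul (K : 𝓢(E, ℝ)) (f : 𝓢(E, F)) (t : ℝ) (x : E) :
    Integrable fun z ↦ K z • f (x - t • z) := by
  have hg : (fun z ↦ f (x - t • z)).HasTemperateGrowth :=
    f.hasTemperateGrowth.comp (by fun_prop)
  exact (bilinLeftCLM (ContinuousLinearMap.lsmul ℝ ℝ) hg K).integrable

theorem mollify_zero_right [CompleteSpace F] (K : 𝓢(E, ℝ)) (f : 𝓢(E, F)) (x : E) :
    mollify K f 0 x = (∫ z, K z) • f x := by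
  simp [mollify, integral_smul_const]

theorem mollify_sum (s : Finset ι) (K : 𝓢(E, ℝ)) (f : ι → 𝓢(E, F)) (t : ℝ) (x : E) :
    mollify K (∑ i ∈ s, f i) t x = ∑ i ∈ s, mollify K (f i) t x := by
  simp only [mollify, sum_apply, Finset.smul_sum]
  exact integral_finsetSum _ fun i _ ↦ integrable_smul_comp_sub_smul K (f i) t x

theorem mollify_lineDerivOp_left (K : 𝓢(E, ℝ)) (f : 𝓢(E, F)) (u : E) (t : ℝ) (x : E) :
    mollify (∂_{u} K) f t x = t • mollify K (∂_{u} f) t x := by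
  have hK z : HasLineDerivAt ℝ K (∂_{u} K z) z u := (K.hasFDerivAt z).hasLineDerivAt u
  have hf z : HasLineDerivAt ℝ (fun z ↦ f (x - t • z)) (-(t • ∂_{u} f (x - t • z))) z u := by
    have h := (f.hasFDerivAt (x - t • z)).comp z
      (((hasFDerivAt_id z).const_smul t).const_sub x)
    simpa [lineDerivOp_apply_eq_fderiv, Function.comp_def] using h.hasLineDerivAt u
  have hint := (integrable_smul_comp_sub_smul K (∂_{u} f) t x).smul (-t)
  have ibp := integral_bilinear_hasLineDerivAt_right_eq_neg_left_of_integrable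
    (B := ContinuousLinearMap.lsmul ℝ ℝ) (integrable_smul_comp_sub_smul (∂_{u} K) f t x)
    (by simpa [Pi.smul_def, smul_comm _ t] using hint)
    (integrable_smul_comp_sub_smul K f t x) (fun z _ ↦ hK z) (fun z _ ↦ hf z)
  calc mollify (∂_{u} K) f t x = ∫ z, t • K z • ∂_{u} f (x - t • z) := by
        simpa [mollify, integral_neg, smul_comm _ t] using ibp.symm
    _ = t • mollify K (∂_{u} f) t x := integral_smul _ _

theorem hasDerivAt_mollify (K : 𝓢(E, ℝ)) (f : 𝓢(E, F)) (t : ℝ) (x : E) :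
    HasDerivAt (fun t ↦ mollify K f t x) (∫ z, -(K z • fderiv ℝ f (x - t • z) z)) t := by
  have hderiv z s : HasDerivAt (fun s : ℝ ↦ K z • f (x - s • z))
      (-(K z • fderiv ℝ f (x - s • z) z)) s := by
    have h := ((f.hasFDerivAt (x - s • z)).comp_hasDerivAt s
      (((hasDerivAt_id s).smul_const z).const_sub x)).const_smul (K z)
    simpa [Function.comp_def, Pi.smul_def] using h
  obtain ⟨C, hC⟩ : ∃ C, ∀ y, ‖fderiv ℝ f y‖ ≤ C := ⟨_, norm_le_seminorm ℝ (fderivCLM ℝ E F f)⟩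
  have hfd : Continuous (fderiv ℝ f) := (fderivCLM ℝ E F f).continuous
  refine (hasDerivAt_integral_of_dominated_loc_of_deriv_le (bound := fun z ↦ C * (‖z‖ ^ 1 * ‖K z‖))
    Filter.univ_mem (.of_forall fun s ↦ (integrable_smul_comp_sub_smul K f s x).1)
    (integrable_smul_comp_sub_smul K f t x) (Continuous.aestronglyMeasurable (by fun_prop))
    (.of_forall fun z s _ ↦ ?_) ((K.integrable_pow_mul volume 1).const_mul C)
    (.of_forall fun z s _ ↦ hderiv z s)).2
  calc ‖-(K z • fderiv ℝ f (x - s • z) z)‖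
      ≤ ‖K z‖ * (C * ‖z‖) := by
        rw [norm_neg, norm_smul]
        gcongr
        exact (fderiv ℝ f _).le_of_opNorm_le (hC _) z
    _ = _ := by ring

theorem hasDerivAt_mollify_schwartzGaussian (f : 𝓢(E, F)) (t : ℝ) (x : E) :
    HasDerivAt (fun t ↦ mollify (schwartzGaussian E) f t x)
      ((t / (2 * Real.pi)) • mollify (schwartzGaussian E) (Δ f) t x) t := by
  let b := stdOrthonormalBasis ℝ E
  have hkernel z : -(schwartzGaussian E z • fderiv ℝ f (x - t • z) z) =
      (2 * Real.pi)⁻¹ • ∑ i, ∂_{b i} (schwartzGaussian E) z • ∂_{b i} f (x - t • z) := by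
    rw [fderiv_apply_eq_sum_lineDerivOp b, Finset.smul_sum, Finset.smul_sum,
      ← Finset.sum_neg_distrib]
    refine Finset.sum_congr rfl fun i _ ↦ ?_
    rw [lineDerivOp_schwartzGaussian_apply, smul_smul, smul_smul, ← neg_smul]
    congr 1
    field_simp
  convert hasDerivAt_mollify (schwartzGaussian E) f t x using 1
  simp_rw [hkernel]
  rw [integral_smul, integral_finsetSum _ fun i _ ↦
    integrable_smul_comp_sub_smul (∂_{b i} (schwartzGaussian E)) (∂_{b i} f) t x,
    laplacian_eq_sum b, mollify_sum, Finset.smul_sum, Finset.smul_sum]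
  refine Finset.sum_congr rfl fun i _ ↦ ?_
  change _ = _ • mollify _ _ t x
  rw [mollify_lineDerivOp_left, smul_smul, div_eq_inv_mul]

end Mollify

section Scaling

variable {E F : Type*} [NormedAddCommGroup E] [NormedSpace ℝ E] [FiniteDimensional ℝ E]
  [MeasureSpace E] [BorelSpace E] [Measure.IsAddHaarMeasure (volume : Measure E)]
  [NormedAddCommGroup F]

omit [FiniteDimensional ℝ E] [Measure.IsAddHaarMeasure (volume : Measure E)] in
theorem measurableEmbedding_sub_smul {t : ℝ} (ht : 0 < t) (x : E) :
    MeasurableEmbedding fun z : E ↦ x - t • z :=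
  ((Homeomorph.smulOfNeZero t ht.ne').trans (Homeomorph.subLeft x)).measurableEmbedding

theorem map_sub_smul_volume {t : ℝ} (ht : 0 < t) (x : E) :
    (volume : Measure E).map (fun z ↦ x - t • z) =
      ENNReal.ofReal t ^ (-(Module.finrank ℝ E : ℝ)) • volume := by
  have hcomp : (fun z : E ↦ x - t • z) = (fun y ↦ x - y) ∘ fun z ↦ t • z := rfl
  rw [hcomp, ← Measure.map_map (by fun_prop) (by fun_prop), Measure.map_addHaar_smul _ ht.ne',
    Measure.map_smul, Measure.map_sub_left_eq_self, ENNReal.ofReal_rpow_of_pos ht,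
    Real.rpow_neg ht.le, Real.rpow_natCast, abs_of_pos (by positivity)]

theorem lintegral_comp_sub_smul (g : E → ℝ≥0∞) {t : ℝ} (ht : 0 < t) (x : E) :
    ∫⁻ z, g (x - t • z) = ENNReal.ofReal t ^ (-(Module.finrank ℝ E : ℝ)) * ∫⁻ y, g y := by
  rw [← (measurableEmbedding_sub_smul ht x).lintegral_map, map_sub_smul_volume ht,
    lintegral_smul_measure, smul_eq_mul]

omit [FiniteDimensional ℝ E] [MeasureSpace E] [BorelSpace E]
  [Measure.IsAddHaarMeasure (volume : Measure E)] in
theorem enorm_sub_smul_sub_sub_smul {t : ℝ} (ht : 0 ≤ t) (x z w : E) :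
    ‖x - t • z - (x - t • w)‖ₑ = ENNReal.ofReal t * ‖z - w‖ₑ := by
  rw [_root_.sub_sub_sub_cancel_left, ← smul_sub, enorm_smul, enorm_sub_rev,
    Real.enorm_of_nonneg ht]

theorem eLpNorm_comp_sub_smul (f : E → F) (s : ℝ≥0∞) {t : ℝ} (ht : 0 < t) (x : E) :
    eLpNorm (fun z ↦ f (x - t • z)) s volume =
      ENNReal.ofReal t ^ (-(Module.finrank ℝ E * (1 / s).toReal)) * eLpNorm f s volume := by
  have hpos : ENNReal.ofReal t ^ (-(Module.finrank ℝ E : ℝ)) ≠ 0 := by simp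
  rw [← neg_mul, ENNReal.rpow_mul, ← smul_eq_mul (_ ^ _) (eLpNorm f s volume),
    ← eLpNorm_smul_measure_of_ne_zero hpos, ← map_sub_smul_volume ht x,
    (measurableEmbedding_sub_smul ht x).eLpNorm_map_measure]
  rfl

theorem gagliardo_comp_sub_smul {d : ℕ} {r p : ℝ} (hp : 0 < p) (f : Ed d → F) {t : ℝ}
    (ht : 0 < t) (x : Ed d) :
    gagliardo d r p (fun z ↦ f (x - t • z)) =
      ENNReal.ofReal t ^ (r - d / p) * gagliardo d r p f := by
  set τ := ENNReal.ofReal t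
  have hτ0 : τ ≠ 0 := by simpa [τ]
  have hτ : τ ≠ ∞ := ENNReal.ofReal_ne_top
  have hpow (a : ℝ) : τ ^ a ≠ ∞ := ENNReal.rpow_ne_top_of_ne_zero hτ0 hτ
  let G (y w : Ed d) : ℝ≥0∞ := ‖f y - f w‖ₑ ^ p / ‖y - w‖ₑ ^ (r * p + d)
  have hG (z w : Ed d) : ‖f (x - t • z) - f (x - t • w)‖ₑ ^ p / ‖z - w‖ₑ ^ (r * p + d) =
      τ ^ (r * p + d) * G (x - t • z) (x - t • w) := by
    simp only [G, enorm_sub_smul_sub_sub_smul ht.le]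
    rw [ENNReal.mul_rpow_of_ne_top hτ enorm_ne_top, ← mul_div_assoc,
      ENNReal.mul_div_mul_left _ _ (by simp [hτ0, hτ]) (hpow _)]
  have hscale : ∫⁻ z, ∫⁻ w, G (x - t • z) (x - t • w) =
      τ ^ (-(d : ℝ)) * (τ ^ (-(d : ℝ)) * ∫⁻ y, ∫⁻ w, G y w) := by
    simp_rw [lintegral_comp_sub_smul (G _) ht x, finrank_euclideanSpace_fin]
    rw [lintegral_const_mul' _ _ (hpow _),
      lintegral_comp_sub_smul (fun y ↦ ∫⁻ w, G y w) ht x, finrank_euclideanSpace_fin]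
  calc gagliardo d r p (fun z ↦ f (x - t • z))
      = (∫⁻ z, ∫⁻ w, τ ^ (r * p + d) * G (x - t • z) (x - t • w)) ^ (1 / p) := by
        simp_rw [← hG]; rfl
    _ = (τ ^ ((r - d / p) * p) * ∫⁻ y, ∫⁻ w, G y w) ^ (1 / p) := by
        simp_rw [lintegral_const_mul' _ _ (hpow _)]
        rw [hscale, ← mul_assoc, ← mul_assoc, ← ENNReal.rpow_add _ _ hτ0 hτ,
          ← ENNReal.rpow_add _ _ hτ0 hτ]
        congr 3
        field_simp
        ring
    _ = τ ^ (r - d / p) * gagliardo d r p f := by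
        rw [ENNReal.mul_rpow_of_nonneg _ _ (by positivity), ← ENNReal.rpow_mul, mul_assoc,
          mul_one_div_cancel hp.ne', mul_one]
        rfl

end Scaling

section Estimates

theorem enorm_mollify_le_eLpNorm {E F : Type*} [NormedAddCommGroup E] [InnerProductSpace ℝ E]
    [FiniteDimensional ℝ E] [MeasurableSpace E] [BorelSpace E] [NormedAddCommGroup F]
    [NormedSpace ℝ F] (K : 𝓢(E, ℝ)) (f : 𝓢(E, F)) (q s : ℝ≥0∞) [ENNReal.HolderConjugate q s]
    {t : ℝ} (ht : 0 < t) (x : E) :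
    ‖mollify K f t x‖ₑ ≤ eLpNorm K q volume *
      (ENNReal.ofReal t ^ (-(Module.finrank ℝ E * (1 / s).toReal)) * eLpNorm f s volume) := by
  have hf : Continuous fun z ↦ f (x - t • z) := by fun_prop
  calc ‖mollify K f t x‖ₑ
      ≤ ∫⁻ z, ‖K z • f (x - t • z)‖ₑ := enorm_integral_le_lintegral_enorm _
    _ = eLpNorm (⇑K • fun z ↦ f (x - t • z)) 1 volume := eLpNorm_one_eq_lintegral_enorm.symm
    _ ≤ eLpNorm K q volume * eLpNorm (fun z ↦ f (x - t • z)) s volume :=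
        eLpNorm_smul_le_mul_eLpNorm hf.aestronglyMeasurable K.continuous.aestronglyMeasurable
    _ = _ := by rw [eLpNorm_comp_sub_smul f s ht]

theorem enorm_mollify_lineDerivOp_le {E F : Type*} [NormedAddCommGroup E] [InnerProductSpace ℝ E]
    [FiniteDimensional ℝ E] [MeasurableSpace E] [BorelSpace E] [NormedAddCommGroup F]
    [NormedSpace ℝ F] (K : 𝓢(E, ℝ)) (f : 𝓢(E, F)) (u : E) (q s : ℝ≥0∞)
    [ENNReal.HolderConjugate q s] {t : ℝ} (ht : 0 < t) (x : E) :
    ‖mollify K (∂_{u} f) t x‖ₑ ≤ eLpNorm (∂_{u} K : 𝓢(E, ℝ)) q volume *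
      (ENNReal.ofReal t ^ (-(1 + Module.finrank ℝ E * (1 / s).toReal)) * eLpNorm f s volume) := by
  have hτ0 : ENNReal.ofReal t ≠ 0 := by simpa
  calc ‖mollify K (∂_{u} f) t x‖ₑ = ‖t⁻¹ • mollify (∂_{u} K) f t x‖ₑ := by
        rw [mollify_lineDerivOp_left, inv_smul_smul₀ ht.ne']
    _ = ENNReal.ofReal t ^ (-1 : ℝ) * ‖mollify (∂_{u} K) f t x‖ₑ := by
        rw [enorm_smul, Real.enorm_of_nonneg (by positivity), ENNReal.ofReal_inv_of_pos ht,
          ENNReal.rpow_neg_one]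
    _ ≤ ENNReal.ofReal t ^ (-1 : ℝ) * (eLpNorm (∂_{u} K : 𝓢(E, ℝ)) q volume *
        (ENNReal.ofReal t ^ (-(Module.finrank ℝ E * (1 / s).toReal)) * eLpNorm f s volume)) := by
        gcongr
        exact enorm_mollify_le_eLpNorm _ f q s ht x
    _ = _ := by
        rw [neg_add, ENNReal.rpow_add _ _ hτ0 ENNReal.ofReal_ne_top]
        ring

theorem integral_smul_eq_integral_prod_smul_sub {α F : Type*} [MeasurableSpace α] {μ : Measure α}
    [SFinite μ] [NormedAddCommGroup F] [NormedSpace ℝ F] {H η : α → ℝ} (hHi : Integrable H μ)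
    (hηi : Integrable η μ) (hH : ∫ z, H z ∂μ = 0) (hη : ∫ z, η z ∂μ = 1) {g : α → F}
    (hHg : Integrable (fun z ↦ H z • g z) μ) (hηg : Integrable (fun z ↦ η z • g z) μ) :
    ∫ z, H z • g z ∂μ = ∫ z : α × α, (H z.1 * η z.2) • (g z.1 - g z.2) ∂μ.prod μ := by
  have hfst : ∫ z : α × α, η z.2 • H z.1 • g z.1 ∂μ.prod μ = ∫ z, H z • g z ∂μ := by
    rw [← integral_prod_swap]
    simp [integral_prod_smul η fun z ↦ H z • g z, hη]
  have hsnd : ∫ z : α × α, H z.1 • η z.2 • g z.2 ∂μ.prod μ = 0 := by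
    rw [integral_prod_smul H fun z ↦ η z • g z, hH, zero_smul]
  have hint : Integrable (fun z : α × α ↦ η z.2 • H z.1 • g z.1) (μ.prod μ) :=
    (hηi.smul_prod hHg).swap
  calc ∫ z, H z • g z ∂μ
      = ∫ z : α × α, (η z.2 • H z.1 • g z.1 - H z.1 • η z.2 • g z.2) ∂μ.prod μ := by
        rw [integral_sub hint (hHi.smul_prod hηg), hfst, hsnd, sub_zero]
    _ = _ := by simp only [mul_smul, smul_sub, smul_comm (η _) (H _)]

variable {d : ℕ} {F : Type*} [NormedAddCommGroup F] [NormedSpace ℝ F]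

omit [NormedSpace ℝ F] in
theorem lintegral_prod_rpow_eq_gagliardo_rpow {r p : ℝ} (hp : 0 < p) {g : Ed d → F}
    (hg : Continuous g) :
    ∫⁻ z : Ed d × Ed d, (‖g z.1 - g z.2‖ₑ / ‖z.1 - z.2‖ₑ ^ (r + d / p)) ^ p =
      gagliardo d r p g ^ p := by
  rw [gagliardo, ← ENNReal.rpow_mul, one_div_mul_cancel hp.ne', ENNReal.rpow_one,
    Measure.volume_eq_prod, lintegral_prod _ (by fun_prop)]
  have hexp : (r + d / p) * p = r * p + d := by field_simp
  simp_rw [ENNReal.div_rpow_of_nonneg _ _ hp.le, ← ENNReal.rpow_mul, hexp]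
  rfl

/-- The weighted `L^q` norm of `H ⊗ η`, with `q` conjugate to `p`, that is paired with the
seminorm `[·]_{r,p}` by Hölder's inequality. -/
noncomputable def gagliardoDualNorm (d : ℕ) (r p : ℝ) (H η : 𝓢(Ed d, ℝ)) : ℝ≥0∞ :=
  (∫⁻ z : Ed d × Ed d, (‖H z.1‖ₑ * ‖η z.2‖ₑ * ‖z.1 - z.2‖ₑ ^ (r + d / p)) ^
    p.conjExponent) ^ (1 / p.conjExponent)

theorem enorm_integral_smul_le_gagliardo (r : ℝ) {p : ℝ} (hp : 1 < p) {H η : 𝓢(Ed d, ℝ)}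
    (hH : ∫ z, H z = 0) (hη : ∫ z, η z = 1) {g : Ed d → F} (hg : Continuous g)
    (hHg : Integrable fun z ↦ H z • g z) (hηg : Integrable fun z ↦ η z • g z) :
    ‖∫ z, H z • g z‖ₑ ≤ gagliardoDualNorm d r p H η * gagliardo d r p g := by
  let A (z : Ed d × Ed d) : ℝ≥0∞ := ‖H z.1‖ₑ * ‖η z.2‖ₑ * ‖z.1 - z.2‖ₑ ^ (r + d / p)
  let B (z : Ed d × Ed d) : ℝ≥0∞ := ‖g z.1 - g z.2‖ₑ / ‖z.1 - z.2‖ₑ ^ (r + d / p)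
  have le_mul (z : Ed d × Ed d) : ‖(H z.1 * η z.2) • (g z.1 - g z.2)‖ₑ ≤ A z * B z := by
    obtain hz | hz := eq_or_ne z.1 z.2
    · simp [hz]
    · have hz' : ‖z.1 - z.2‖ₑ ≠ 0 := by simpa [sub_eq_zero] using hz
      have hpow0 : ‖z.1 - z.2‖ₑ ^ (r + d / p) ≠ 0 := by simp [hz']
      have hpow : ‖z.1 - z.2‖ₑ ^ (r + d / p) ≠ ∞ :=
        ENNReal.rpow_ne_top_of_ne_zero hz' enorm_ne_top
      rw [enorm_smul, enorm_mul, mul_assoc (_ * _), ENNReal.mul_div_cancel hpow0 hpow]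
  calc ‖∫ z, H z • g z‖ₑ
      = ‖∫ z : Ed d × Ed d, (H z.1 * η z.2) • (g z.1 - g z.2)‖ₑ := by
        rw [integral_smul_eq_integral_prod_smul_sub H.integrable η.integrable hH hη hHg hηg,
          Measure.volume_eq_prod]
    _ ≤ ∫⁻ z, (A * B) z := (enorm_integral_le_lintegral_enorm _).trans (lintegral_mono le_mul)
    _ ≤ (∫⁻ z, A z ^ p.conjExponent) ^ (1 / p.conjExponent) * (∫⁻ z, B z ^ p) ^ (1 / p) :=
        ENNReal.lintegral_mul_le_Lp_mul_Lq _ (Real.HolderConjugate.conjExponent hp).symm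
          (by fun_prop) (by fun_prop)
    _ = gagliardoDualNorm d r p H η * gagliardo d r p g := by
        rw [lintegral_prod_rpow_eq_gagliardo_rpow (by positivity) hg, ← ENNReal.rpow_mul,
          mul_one_div_cancel (by positivity), ENNReal.rpow_one]
        rfl

theorem enorm_mollify_le_gagliardo (r : ℝ) {p : ℝ} (hp : 1 < p) {H η : 𝓢(Ed d, ℝ)}
    (hH : ∫ z, H z = 0) (hη : ∫ z, η z = 1) (f : 𝓢(Ed d, F)) {t : ℝ} (ht : 0 < t) (x : Ed d) :
    ‖mollify H f t x‖ₑ ≤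
      gagliardoDualNorm d r p H η * (ENNReal.ofReal t ^ (r - d / p) * gagliardo d r p f) := by
  rw [← gagliardo_comp_sub_smul (by positivity) f ht x]
  exact enorm_integral_smul_le_gagliardo r hp hH hη (by fun_prop)
    (integrable_smul_comp_sub_smul H f t x) (integrable_smul_comp_sub_smul η f t x)

theorem norm_sub_rpow_le {E : Type*} [SeminormedAddCommGroup E] {σ : ℝ} (hσ : 0 ≤ σ) (z w : E) :
    ‖z - w‖ ^ σ ≤ (1 + ‖z‖ ^ 2) ^ (σ / 2) * (1 + ‖w‖ ^ 2) ^ (σ / 2) := by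
  have hsq : ‖z - w‖ ^ 2 ≤ (1 + ‖z‖ ^ 2) * (1 + ‖w‖ ^ 2) :=
    calc ‖z - w‖ ^ 2 ≤ (‖z‖ + ‖w‖) ^ 2 := by gcongr; exact norm_sub_le z w
      _ ≤ _ := by nlinarith only [sq_nonneg (1 - ‖z‖ * ‖w‖)]
  calc ‖z - w‖ ^ σ = (‖z - w‖ ^ 2) ^ (σ / 2) := by
        rw [← Real.rpow_natCast_mul (norm_nonneg _)]
        congr 1
        push_cast
        ring
    _ ≤ ((1 + ‖z‖ ^ 2) * (1 + ‖w‖ ^ 2)) ^ (σ / 2) := by gcongr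
    _ = _ := Real.mul_rpow (by positivity) (by positivity)

theorem lintegral_enorm_rpow_lt_top {E : Type*} [NormedAddCommGroup E] [NormedSpace ℝ E]
    [MeasurableSpace E] [BorelSpace E] [SecondCountableTopology E] {μ : Measure E}
    [μ.HasTemperateGrowth] {q : ℝ} (hq : 0 < q) (K : 𝓢(E, F)) : ∫⁻ z, ‖K z‖ₑ ^ q ∂μ < ∞ := by
  have h := K.eLpNorm_lt_top (ENNReal.ofReal q) μ
  rwa [eLpNorm_lt_top_iff_lintegral_rpow_enorm_lt_top (by simpa) ENNReal.ofReal_ne_top,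
    ENNReal.toReal_ofReal hq.le] at h

theorem gagliardoDualNorm_ne_top {r p : ℝ} (hp : 1 < p) (hr : 0 ≤ r + d / p) (H η : 𝓢(Ed d, ℝ)) :
    gagliardoDualNorm d r p H η ≠ ∞ := by
  have hq : 0 < p.conjExponent := (Real.HolderConjugate.conjExponent hp).symm.pos
  let W (z : Ed d) : ℝ := (1 + ‖z‖ ^ 2) ^ ((r + d / p) / 2)
  have hW : W.HasTemperateGrowth := hasTemperateGrowth_one_add_norm_sq_rpow _ _
  let weighted (K : 𝓢(Ed d, ℝ)) : 𝓢(Ed d, ℝ) := smulLeftCLM ℝ W K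
  have enorm_weighted (K : 𝓢(Ed d, ℝ)) (z : Ed d) : ‖weighted K z‖ₑ = ‖W z‖ₑ * ‖K z‖ₑ := by
    rw [smulLeftCLM_apply_apply hW, enorm_smul]
  have enorm_sub_rpow_le (z w : Ed d) : ‖z - w‖ₑ ^ (r + d / p) ≤ ‖W z‖ₑ * ‖W w‖ₑ := by
    rw [← enorm_mul, ← ofReal_norm, ENNReal.ofReal_rpow_of_nonneg (norm_nonneg _) hr,
      Real.enorm_of_nonneg (by positivity)]
    exact ENNReal.ofReal_le_ofReal (norm_sub_rpow_le hr z w)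
  have aemeasurable_weighted (K : 𝓢(Ed d, ℝ)) :
      AEMeasurable (fun z ↦ ‖weighted K z‖ₑ ^ p.conjExponent) := by fun_prop
  refine ENNReal.rpow_ne_top_of_nonneg (one_div_nonneg.2 hq.le) (ne_of_lt ?_)
  calc ∫⁻ z : Ed d × Ed d, (‖H z.1‖ₑ * ‖η z.2‖ₑ * ‖z.1 - z.2‖ₑ ^ (r + d / p)) ^ p.conjExponent
      ≤ ∫⁻ z : Ed d × Ed d,
          ‖weighted H z.1‖ₑ ^ p.conjExponent * ‖weighted η z.2‖ₑ ^ p.conjExponent := by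
        refine lintegral_mono fun z ↦ ?_
        rw [← ENNReal.mul_rpow_of_nonneg _ _ hq.le, enorm_weighted, enorm_weighted,
          mul_mul_mul_comm, mul_comm]
        exact ENNReal.rpow_le_rpow (mul_le_mul_left (enorm_sub_rpow_le z.1 z.2) _) hq.le
    _ = (∫⁻ z, ‖weighted H z‖ₑ ^ p.conjExponent) * ∫⁻ z, ‖weighted η z‖ₑ ^ p.conjExponent :=
        lintegral_prod_mul (aemeasurable_weighted H) (aemeasurable_weighted η)
    _ < ∞ := ENNReal.mul_lt_top (lintegral_enorm_rpow_lt_top hq _)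
        (lintegral_enorm_rpow_lt_top hq _)

end Estimates

section VectorField

local notation "𝐞" => EuclideanSpace.basisFun (Fin _) ℝ

variable {d : ℕ} {r p : ℝ}

/-- The `n`-th component `v^n` of a Schwartz vector field. -/
noncomputable def component (v : 𝓢(Ed d, Ed d)) (n : Fin d) : 𝓢(Ed d, ℝ) :=
  postcompCLM (EuclideanSpace.proj n : Ed d →L[ℝ] ℝ) v

/-- The vorticity component `ω^{mn} = ∂_m v^n − ∂_n v^m` as a Schwartz function. -/
noncomputable def vorticity (v : 𝓢(Ed d, Ed d)) (m n : Fin d) : 𝓢(Ed d, ℝ) :=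
  ∂_{𝐞 m} (component v n) - ∂_{𝐞 n} (component v m)

theorem pd_component (v : 𝓢(Ed d, Ed d)) (m n : Fin d) (x : Ed d) :
    pd d m (fun y ↦ v y n) x = ∂_{𝐞 m} (component v n) x := by
  rw [lineDerivOp_apply_eq_fderiv, EuclideanSpace.basisFun_apply]
  rfl

theorem pd_sub_pd_eq_vorticity (v : 𝓢(Ed d, Ed d)) (m n : Fin d) :
    (fun x ↦ pd d m (fun y ↦ v y n) x - pd d n (fun y ↦ v y m) x) = vorticity v m n := by
  ext x
  rw [pd_component, pd_component]
  rfl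

theorem lineDerivOp_component_apply (v : 𝓢(Ed d, Ed d)) (u : Ed d) (n : Fin d) (x : Ed d) :
    ∂_{u} (component v n) x = fderiv ℝ v x u n := by
  have h : HasFDerivAt (component v n) ((EuclideanSpace.proj n : Ed d →L[ℝ] ℝ) ∘L fderiv ℝ v x) x :=
    (EuclideanSpace.proj n : Ed d →L[ℝ] ℝ).hasFDerivAt.comp x (v.hasFDerivAt x)
  rw [lineDerivOp_apply_eq_fderiv, h.fderiv]
  rfl

theorem laplacian_component {v : 𝓢(Ed d, Ed d)} (hv : ∑ m, ∂_{𝐞 m} (component v m) = 0)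
    (n : Fin d) : Δ (component v n) = ∑ m, ∂_{𝐞 m} (vorticity v m n) := by
  have hdiv : ∑ m, ∂_{𝐞 m} (∂_{𝐞 n} (component v m)) = 0 := by
    simp_rw [lineDerivOp_comm _ _ (𝐞 n)]
    rw [← lineDerivOp_sum, hv, lineDerivOp_zero]
  simp only [vorticity, sub_eq_add_neg, lineDerivOp_add, lineDerivOp_neg, Finset.sum_add_distrib,
    Finset.sum_neg_distrib]
  rw [hdiv, neg_zero, add_zero, laplacian_eq_sum 𝐞]

theorem enorm_lineDerivOp_component_le (v : 𝓢(Ed d, Ed d)) (m n : Fin d) (x : Ed d) :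
    ‖∂_{𝐞 m} (component v n) x‖ₑ ≤ ‖fderiv ℝ v x‖ₑ := by
  rw [lineDerivOp_component_apply]
  calc ‖fderiv ℝ v x (𝐞 m) n‖ₑ ≤ ‖fderiv ℝ v x (𝐞 m)‖ₑ := PiLp.enorm_apply_le _ _
    _ ≤ ‖fderiv ℝ v x‖ₑ * ‖(𝐞 m : Ed d)‖ₑ := ContinuousLinearMap.le_opENorm _ _
    _ = ‖fderiv ℝ v x‖ₑ := by
      rw [OrthonormalBasis.enorm_eq_one, mul_one]

theorem enorm_vorticity_le (v : 𝓢(Ed d, Ed d)) (m n : Fin d) (x : Ed d) :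
    ‖vorticity v m n x‖ₑ ≤ 2 * ‖fderiv ℝ v x‖ₑ :=
  calc ‖vorticity v m n x‖ₑ
      ≤ ‖∂_{𝐞 m} (component v n) x‖ₑ + ‖∂_{𝐞 n} (component v m) x‖ₑ := enorm_sub_le
    _ ≤ ‖fderiv ℝ v x‖ₑ + ‖fderiv ℝ v x‖ₑ :=
      add_le_add (enorm_lineDerivOp_component_le v m n x) (enorm_lineDerivOp_component_le v n m x)
    _ = 2 * ‖fderiv ℝ v x‖ₑ := (two_mul _).symm

theorem enorm_fderiv_le_sum (v : 𝓢(Ed d, Ed d)) (x : Ed d) :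
    ‖fderiv ℝ v x‖ₑ ≤ ∑ m : Fin d, ∑ n, ‖∂_{𝐞 m} (component v n) x‖ₑ := by
  simp_rw [lineDerivOp_component_apply]
  exact (enorm_le_sum_enorm_apply_orthonormalBasis 𝐞 _).trans
    (Finset.sum_le_sum fun m _ ↦ enorm_le_sum_enorm_apply _)

theorem hasDerivAt_mollify_lineDerivOp_component {v : 𝓢(Ed d, Ed d)}
    (hv : ∑ m, ∂_{𝐞 m} (component v m) = 0) (u : Ed d) (n : Fin d) (t : ℝ) (x : Ed d) :
    HasDerivAt (fun t ↦ mollify (schwartzGaussian (Ed d)) (∂_{u} (component v n)) t x)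
      ((2 * Real.pi * t)⁻¹ • ∑ m, mollify (∂_{𝐞 m} (∂_{u} (schwartzGaussian (Ed d))))
        (vorticity v m n) t x) t := by
  refine (hasDerivAt_mollify_schwartzGaussian (∂_{u} (component v n)) t x).congr_deriv ?_
  rw [laplacian_lineDerivOp, laplacian_component hv, lineDerivOp_sum, mollify_sum]
  simp_rw [mollify_lineDerivOp_left, Finset.smul_sum, smul_smul]
  congr! 2
  obtain rfl | ht := eq_or_ne t 0
  · simp
  · field_simp

theorem enorm_mollify_lineDerivOp_component_sub_le (hp : 1 < p) (hh : 0 < r - d / p)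
    {v : 𝓢(Ed d, Ed d)} (hv : ∑ m, ∂_{𝐞 m} (component v m) = 0) (u : Ed d) (n : Fin d)
    {R : ℝ} (hR : 0 < R) (x : Ed d) :
    ‖mollify (schwartzGaussian (Ed d)) (∂_{u} (component v n)) R x - ∂_{u} (component v n) x‖ₑ ≤
      (∑ m : Fin d, gagliardoDualNorm d r p (∂_{𝐞 m} (∂_{u} (schwartzGaussian (Ed d))))
        (schwartzGaussian (Ed d))) * (⨆ m, ⨆ n, gagliardo d r p (vorticity v m n)) /
        ENNReal.ofReal (r - d / p) * ENNReal.ofReal R ^ (r - d / p) := by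
  set G := schwartzGaussian (Ed d)
  set M := ⨆ m, ⨆ n, gagliardo d r p (vorticity v m n)
  have hzero : mollify G (∂_{u} (component v n)) 0 x = ∂_{u} (component v n) x := by
    rw [mollify_zero_right, integral_schwartzGaussian, one_smul]
  rw [← hzero]
  refine enorm_sub_le_of_enorm_deriv_le_rpow
    (fun t ↦ hasDerivAt_mollify_lineDerivOp_component hv u n t x) hh (fun t ht ↦ ?_) hR
  have mollify_le (m : Fin d) : ‖mollify (∂_{𝐞 m} (∂_{u} G)) (vorticity v m n) t x‖ₑ ≤
      gagliardoDualNorm d r p (∂_{𝐞 m} (∂_{u} G)) G * (ENNReal.ofReal t ^ (r - d / p) * M) := by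
    refine (enorm_mollify_le_gagliardo r hp (integral_lineDerivOp_eq_zero volume _ _)
      integral_schwartzGaussian _ ht x).trans ?_
    gcongr
    exact le_iSup₂ (f := fun m n ↦ gagliardo d r p (vorticity v m n)) m n
  have inv_le : ‖(2 * Real.pi * t)⁻¹‖ₑ ≤ ENNReal.ofReal t ^ (-1 : ℝ) := by
    rw [Real.enorm_of_nonneg (by positivity), ENNReal.rpow_neg_one, ← ENNReal.ofReal_inv_of_pos ht]
    refine ENNReal.ofReal_le_ofReal (inv_anti₀ ht ?_)
    nlinarith [Real.pi_gt_three]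
  calc ‖(2 * Real.pi * t)⁻¹ • ∑ m, mollify (∂_{𝐞 m} (∂_{u} G)) (vorticity v m n) t x‖ₑ
      ≤ ENNReal.ofReal t ^ (-1 : ℝ) * ∑ m, gagliardoDualNorm d r p (∂_{𝐞 m} (∂_{u} G)) G *
          (ENNReal.ofReal t ^ (r - d / p) * M) := by
        rw [enorm_smul]
        gcongr
        exact (enorm_sum_le _ _).trans (Finset.sum_le_sum fun m _ ↦ mollify_le m)
    _ = _ := by
        rw [← Finset.sum_mul, sub_eq_add_neg (r - d / p), ENNReal.rpow_add _ _ (by simpa)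
          ENNReal.ofReal_ne_top]
        ring

/-- The constant in the bound for `∂_u v^n` by the `L^s` norm of `v` and the seminorms of its
vorticity, before optimizing the mollification scale. -/
noncomputable def gradientConst (d : ℕ) (r p : ℝ) (s : ℝ≥0∞) (u : Ed d) : ℝ≥0∞ :=
  eLpNorm (∂_{u} (schwartzGaussian (Ed d)) : 𝓢(Ed d, ℝ)) s.conjExponent volume +
    (∑ m : Fin d, gagliardoDualNorm d r p (∂_{𝐞 m} (∂_{u} (schwartzGaussian (Ed d))))
      (schwartzGaussian (Ed d))) / ENNReal.ofReal (r - d / p)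

theorem gradientConst_ne_top (hp : 1 < p) (hh : 0 < r - d / p) (s : ℝ≥0∞) (u : Ed d) :
    gradientConst d r p s u ≠ ∞ := by
  have hr : 0 ≤ r + d / p := by
    have : 0 ≤ d / p := by positivity
    linarith
  have hdual : ∑ m : Fin d, gagliardoDualNorm d r p (∂_{𝐞 m} (∂_{u} (schwartzGaussian (Ed d))))
      (schwartzGaussian (Ed d)) ≠ ∞ :=
    ENNReal.sum_ne_top.2 fun m _ ↦ gagliardoDualNorm_ne_top hp hr _ _
  exact ENNReal.add_ne_top.2 ⟨(SchwartzMap.eLpNorm_lt_top _ _ _).ne,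
    ENNReal.div_ne_top hdual (by simpa using hh)⟩

theorem enorm_lineDerivOp_component_le_add (hp : 1 < p) (hh : 0 < r - d / p) {s : ℝ≥0∞}
    (hs : 1 ≤ s) {v : 𝓢(Ed d, Ed d)} (hv : ∑ m, ∂_{𝐞 m} (component v m) = 0) (u : Ed d)
    (n : Fin d) (x : Ed d) {R : ℝ} (hR : 0 < R) :
    ‖∂_{u} (component v n) x‖ₑ ≤ gradientConst d r p s u *
      (ENNReal.ofReal R ^ (-(1 + d * (1 / s).toReal)) * eLpNorm v s volume +
        ENNReal.ofReal R ^ (r - d / p) * ⨆ m, ⨆ n, gagliardo d r p (vorticity v m n)) := by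
  have := ENNReal.HolderConjugate.conjExponent hs
  let A := mollify (schwartzGaussian (Ed d)) (∂_{u} (component v n)) R x
  have component_le : eLpNorm (component v n) s volume ≤ eLpNorm v s volume :=
    eLpNorm_mono fun y ↦ PiLp.norm_apply_le (v y) n
  have low : ‖A‖ₑ ≤ gradientConst d r p s u *
      (ENNReal.ofReal R ^ (-(1 + d * (1 / s).toReal)) * eLpNorm v s volume) := by
    have := enorm_mollify_lineDerivOp_le (schwartzGaussian (Ed d)) (component v n) u
      s.conjExponent s hR x
    rw [finrank_euclideanSpace_fin] at this
    exact this.trans (mul_le_mul' le_self_add (mul_le_mul_right component_le _))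
  have high : ‖A - ∂_{u} (component v n) x‖ₑ ≤
      gradientConst d r p s u * (ENNReal.ofReal R ^ (r - d / p) *
        ⨆ m, ⨆ n, gagliardo d r p (vorticity v m n)) := by
    refine (enorm_mollify_lineDerivOp_component_sub_le hp hh hv u n hR x).trans ?_
    rw [ENNReal.mul_div_right_comm, mul_assoc, mul_comm (iSup _)]
    exact mul_le_mul_left le_add_self _
  calc ‖∂_{u} (component v n) x‖ₑ = ‖A - (A - ∂_{u} (component v n) x)‖ₑ := by
        rw [_root_.sub_sub_cancel]
    _ ≤ ‖A‖ₑ + ‖A - ∂_{u} (component v n) x‖ₑ := enorm_sub_le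
    _ ≤ _ := (add_le_add low high).trans_eq (mul_add ..).symm

theorem enorm_lineDerivOp_component_le_rpow_mul_rpow (hp : 1 < p) (hh : 0 < r - d / p)
    {s : ℝ≥0∞} (hs : 1 ≤ s) {v : 𝓢(Ed d, Ed d)} (hv : ∑ m, ∂_{𝐞 m} (component v m) = 0)
    (u : Ed d) (n : Fin d) (x : Ed d) :
    ‖∂_{u} (component v n) x‖ₑ ≤ 2 * gradientConst d r p s u *
      (eLpNorm v s volume ^ ((r - d / p) / (r - d / p + (1 + d * (1 / s).toReal))) *
        (⨆ m, ⨆ n, gagliardo d r p (vorticity v m n)) ^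
          ((1 + d * (1 / s).toReal) / (r - d / p + (1 + d * (1 / s).toReal)))) := by
  obtain hV | hV := eq_or_ne (eLpNorm v s volume) 0
  · have hs0 : s ≠ 0 := (zero_lt_one.trans_le hs).ne'
    have v_eq_zero : ⇑v = 0 := (v.continuous.ae_eq_iff_eq volume continuous_zero).1
      ((eLpNorm_eq_zero_iff v.continuous.aestronglyMeasurable hs0).1 hV)
    simp [lineDerivOp_component_apply, v_eq_zero]
  · exact le_mul_rpow_mul_rpow_of_forall_le (by positivity) hh (gradientConst_ne_top hp hh s u) hV
      (v.eLpNorm_lt_top s volume).ne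
      fun R hR ↦ enorm_lineDerivOp_component_le_add hp hh hs hv u n x hR

theorem enorm_fderiv_le_rpow_mul_rpow (hp : 1 < p) (hh : 0 < r - d / p) {s : ℝ≥0∞}
    (hs : 1 ≤ s) {v : 𝓢(Ed d, Ed d)} (hv : ∑ m, ∂_{𝐞 m} (component v m) = 0) (x : Ed d) :
    ‖fderiv ℝ v x‖ₑ ≤ (∑ m : Fin d, ∑ _n : Fin d, 2 * gradientConst d r p s (𝐞 m)) *
      (eLpNorm v s volume ^ ((r - d / p) / (r - d / p + (1 + d * (1 / s).toReal))) *
        (⨆ m, ⨆ n, gagliardo d r p (vorticity v m n)) ^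
          ((1 + d * (1 / s).toReal) / (r - d / p + (1 + d * (1 / s).toReal)))) := by
  simp_rw [Finset.sum_mul]
  exact (enorm_fderiv_le_sum v x).trans <| Finset.sum_le_sum fun m _ ↦ Finset.sum_le_sum fun n _ ↦
    enorm_lineDerivOp_component_le_rpow_mul_rpow hp hh hs hv (𝐞 m) n x

theorem sum_lineDerivOp_component_eq_zero {v : 𝓢(Ed d, Ed d)}
    (hv : ∀ x, ∑ m, pd d m (fun y ↦ v y m) x = 0) : ∑ m, ∂_{𝐞 m} (component v m) = 0 := by
  ext x
  simpa [pd_component] using hv x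

end VectorField

theorem stmt12_general (d : ℕ) {r p : ℝ} (hp : 1 < p) (hh : 0 < r - d / p) {s : ℝ≥0∞}
    (hs : 1 ≤ s) {h a : ℝ} (hh' : h = r - d / p) (ha : a = 1 + d * (1 / s).toReal) :
    ∃ C : ℝ, 0 < C ∧ ∀ v : 𝓢(Ed d, Ed d), (∀ x, ∑ i, pd d i (fun y ↦ v y i) x = 0) →
      ((⨆ x, ‖fderiv ℝ v x‖ₑ) ≤ ENNReal.ofReal C * eLpNorm v s volume ^ (h / (h + a)) *
        (⨆ m, ⨆ n, gagliardo d r p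
          (fun x ↦ pd d m (fun y ↦ v y n) x - pd d n (fun y ↦ v y m) x)) ^ (a / (h + a))) ∧
      ((⨆ m, ⨆ n, ⨆ x, ‖pd d m (fun y ↦ v y n) x - pd d n (fun y ↦ v y m) x‖ₑ) ≤
        ENNReal.ofReal C * eLpNorm v s volume ^ (h / (h + a)) *
        (⨆ m, ⨆ n, gagliardo d r p
          (fun x ↦ pd d m (fun y ↦ v y n) x - pd d n (fun y ↦ v y m) x)) ^ (a / (h + a))) := by
  let K := ∑ m : Fin d, ∑ _n : Fin d, 2 * gradientConst d r p s (EuclideanSpace.basisFun _ ℝ m)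
  have hK : K ≠ ∞ := ENNReal.sum_ne_top.2 fun m _ ↦ ENNReal.sum_ne_top.2 fun _ _ ↦
    ENNReal.mul_ne_top ENNReal.ofNat_ne_top (gradientConst_ne_top hp hh s _)
  refine ⟨2 * K.toReal + 1, by positivity, fun v hv ↦ ?_⟩
  have two_mul_le : 2 * K ≤ ENNReal.ofReal (2 * K.toReal + 1) := by
    rw [ENNReal.le_ofReal_iff_toReal_le (by finiteness) (by positivity)]
    simp
  have sum_eq_zero := sum_lineDerivOp_component_eq_zero hv
  simp_rw [pd_sub_pd_eq_vorticity, congrFun (pd_sub_pd_eq_vorticity v _ _), mul_assoc]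
  subst hh' ha
  have two_mul_enorm_le (x : Ed d) := calc
    2 * ‖fderiv ℝ v x‖ₑ
      ≤ 2 * (K * _) := mul_le_mul_right (enorm_fderiv_le_rpow_mul_rpow hp hh hs sum_eq_zero x) 2
    _ = 2 * K * _ := (mul_assoc ..).symm
    _ ≤ ENNReal.ofReal (2 * K.toReal + 1) * _ := mul_le_mul_left two_mul_le _
  exact ⟨iSup_le fun x ↦ (le_mul_of_one_le_left' one_le_two).trans (two_mul_enorm_le x),
    iSup_le fun m ↦ iSup_le fun n ↦ iSup_le fun x ↦
      (enorm_vorticity_le v m n x).trans (two_mul_enorm_le x)⟩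

/-- For a divergence-free Schwartz vector field `v` on `ℝ³` with vorticity
components `ω^{mn} = ∂_m v^n − ∂_n v^m`, `0 < r < 1`, `2 ≤ p < ∞`, `h = r − 3/p > 0`:
`‖∇v‖_∞` and `max ‖ω^{mn}‖_∞` are bounded by
`C ‖v‖₂^{h/(h+5/2)} (max [ω^{mn}]_{r,p})^{(5/2)/(h+5/2)}`. -/
theorem stmt12 (r p : ℝ) (hr0 : 0 < r) (hr1 : r < 1) (hp2 : 2 ≤ p)
    (hh : 0 < r - 3 / p) :
    ∃ C : ℝ, 0 < C ∧ ∀ v : SchwartzMap (Ed 3) (Ed 3),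
      (∀ x, ∑ i : Fin 3, pd 3 i (fun y => v y i) x = 0) →
      ((⨆ x, (‖fderiv ℝ (⇑v) x‖₊ : ℝ≥0∞))
          ≤ ENNReal.ofReal C *
              eLpNorm (⇑v) 2 volume ^ ((r - 3 / p) / (r - 3 / p + 5 / 2)) *
              (⨆ m : Fin 3, ⨆ n : Fin 3, gagliardo 3 r p
                  (fun x => pd 3 m (fun y => v y n) x - pd 3 n (fun y => v y m) x))
                ^ ((5 / 2) / (r - 3 / p + 5 / 2))) ∧
      ((⨆ m : Fin 3, ⨆ n : Fin 3, ⨆ x,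
            (‖pd 3 m (fun y => v y n) x - pd 3 n (fun y => v y m) x‖₊ : ℝ≥0∞))
          ≤ ENNReal.ofReal C *
              eLpNorm (⇑v) 2 volume ^ ((r - 3 / p) / (r - 3 / p + 5 / 2)) *
              (⨆ m : Fin 3, ⨆ n : Fin 3, gagliardo 3 r p
                  (fun x => pd 3 m (fun y => v y n) x - pd 3 n (fun y => v y m) x))
                ^ ((5 / 2) / (r - 3 / p + 5 / 2))) :=
  stmt12_general 3 (one_lt_two.trans_le hp2) hh one_le_two rfl (by norm_num)
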